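/- The sequence (i_n)_{n≥1} of numbers of plus indecomposable permutations is not P-recursive. -/

import Mathlib

def PlusIndec {n : ℕ} (π : Equiv.Perm (Fin n)) : Prop :=
  ¬ ∃ k : ℕ, 1 ≤ k ∧ k < n ∧
    (Finset.univ.filter fun i : Fin n => (i : ℕ) < k).image π =
      Finset.univ.filter fun i : Fin n => (i : ℕ) < k

noncomputable def plusIndecCount (n : ℕ) : ℕ :=
  Nat.card {π : Equiv.Perm (Fin n) // PlusIndec π}

/-- A sequence `(aₙ)_{n≥1}` of rationals is P-recursive if there are polynomials
`p₀, …, p_d ∈ ℚ[x]` with `p_d ≠ 0` such that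
`p₀(n)aₙ + p₁(n)a_{n+1} + ⋯ + p_d(n)a_{n+d} = 0` for all `n ≥ 1`. -/
def IsPRecursive (a : ℕ → ℚ) : Prop :=
  ∃ (d : ℕ) (p : ℕ → Polynomial ℚ), p d ≠ 0 ∧
    ∀ n : ℕ, 1 ≤ n →
      ∑ i ∈ Finset.range (d + 1), (p i).eval (n : ℚ) * a (n + i) = 0

/-!
Splitting a permutation after its first block gives `F (1 - I) = 1` for the series `F = ∑ n! xⁿ` and
`I = ∑ iₙ xⁿ`. The series `F` satisfies the linear equation `x² F' = (1 - x) F - 1`. If `F` were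
algebraic, then the mean of its conjugates would be a rational solution of that equation, and
comparing degrees shows that there is none. Hence `I` is transcendental as well. Dividing by `F²`
turns the equation for `F` into the Riccati equation `x² I' = -x + (1 + x) I - I²`. By it the
iterated derivatives of `I` with respect to `x² d/dx` are polynomials in `I` whose degrees increase
strictly, so no nontrivial linear combination of them is a polynomial in `x`. A recurrence with
polynomial coefficients for `(iₙ)` would be such a combination.
-/

section DifferentialAlgebra

open Polynomial Differential

variable {R A : Type*} [CommRing R] [CommRing A] [Algebra R A]

lemma exists_natDegree_linearCombination_eq [IsDomain R] {ι : Type*} {v : ι → R[X]}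
    (hv : Function.Injective fun i => (v i).natDegree) {c : ι →₀ R} (hc : c ≠ 0) :
    ∃ i, (Finsupp.linearCombination R v c).natDegree = (v i).natDegree := by
  have natDegree_term : ∀ i ∈ c.support, (c i • v i).natDegree = (v i).natDegree :=
    fun i hi => natDegree_smul _ (Finsupp.mem_support_iff.1 hi)
  obtain ⟨i, hi, hsup⟩ := c.support.exists_mem_eq_sup (Finsupp.support_nonempty_iff.2 hc)
    fun i => (c i • v i).natDegree
  refine ⟨i, ?_⟩
  rw [← natDegree_term i hi, ← hsup, Finsupp.linearCombination_apply, Finsupp.sum]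
  refine natDegree_sum_eq_of_disjoint _ _ ?_
  rintro j ⟨hj, -⟩ k ⟨hk, -⟩ hjk
  simpa only [Function.onFun, Function.comp_apply, natDegree_term j hj, natDegree_term k hk]
    using hv.ne hjk

lemma leadingCoeff_mul_eq_of_minimalFor {y : A} {P S : R[X]}
    (hP : MinimalFor (fun Q : R[X] => Q ≠ 0 ∧ aeval y Q = 0) natDegree P)
    (hS : aeval y S = 0) (hdeg : S.natDegree ≤ P.natDegree) :
    C P.leadingCoeff * S = C (S.coeff P.natDegree) * P := by
  rw [← sub_eq_zero]
  by_contra hne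
  set W := C P.leadingCoeff * S - C (S.coeff P.natDegree) * P with hW
  have aeval_W : aeval y W = 0 := by simp [hW, hS, hP.1.2]
  have coeff_W : W.coeff P.natDegree = 0 := by simp [hW, mul_comm]
  have natDegree_W_le : W.natDegree ≤ P.natDegree :=
    (natDegree_sub_le_of_le ((natDegree_C_mul_le _ _).trans hdeg)
      (natDegree_C_mul_le _ _)).trans (max_self _).le
  have natDegree_W_ne : W.natDegree ≠ P.natDegree := fun h =>
    hne (leadingCoeff_eq_zero.1 (by rw [leadingCoeff, h, coeff_W]))
  exact natDegree_W_ne (natDegree_W_le.antisymm (hP.2 ⟨hne, aeval_W⟩ natDegree_W_le))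

variable [Differential R] [Differential A]

/-- The linear differential operator `∑ cₖ ∂ᵏ`, with coefficients in the base differential ring,
applied to `y`. -/
noncomputable def diffOp (c : ℕ →₀ R) (y : A) : A :=
  Finsupp.linearCombination R (fun k => Differential.deriv^[k] y) c

variable (R) in
/-- `y` is D-finite over `R` if it solves a nontrivial linear differential equation with
coefficients in `R`. The right-hand side may be any element of `R` instead of zero, which over a
domain gives the same notion: if `L y = r ≠ 0` then `(r ∂ - r′) L` annihilates `y`. -/
def IsDFinite (y : A) : Prop :=
  ∃ c : ℕ →₀ R, c ≠ 0 ∧ diffOp c y ∈ Set.range (algebraMap R A)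

lemma natDegree_implicitDeriv [IsDomain R] [CharZero R] {P Q : R[X]} (hP : P.natDegree ≠ 0)
    (hQ : 2 ≤ Q.natDegree) :
    (implicitDeriv Q P).natDegree = P.natDegree + (Q.natDegree - 1) := by
  have hP' : derivative P ≠ 0 := fun h => hP (derivative_eq_zero.1 h)
  have natDegree_mul : (Q * derivative P).natDegree = P.natDegree + (Q.natDegree - 1) := by
    rw [natDegree_mul (ne_zero_of_natDegree_gt hQ) hP', natDegree_derivative]
    omega
  have natDegree_mapCoeffs : (mapCoeffs P).natDegree ≤ P.natDegree :=
    natDegree_le_iff_coeff_eq_zero.2 fun N hN => by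
      rw [coeff_mapCoeffs, coeff_eq_zero_of_natDegree_lt hN, map_zero]
  change (mapCoeffs P + Q * derivative P).natDegree = _
  rw [natDegree_add_eq_right_of_natDegree_lt (by omega), natDegree_mul]

lemma natDegree_iterate_implicitDeriv_X [IsDomain R] [CharZero R] {Q : R[X]}
    (hQ : 2 ≤ Q.natDegree) (k : ℕ) :
    ((implicitDeriv Q)^[k] X).natDegree = k * (Q.natDegree - 1) + 1 := by
  induction k with
  | zero => simp
  | succ k ih =>
    rw [Function.iterate_succ_apply', natDegree_implicitDeriv (by omega) hQ, ih]
    ring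

lemma iterate_deriv_eq_aeval_iterate_implicitDeriv [DifferentialAlgebra R A] {Q : R[X]} {y : A}
    (hy : y′ = aeval y Q) (k : ℕ) :
    Differential.deriv^[k] y = aeval y ((implicitDeriv Q)^[k] X) := by
  induction k with
  | zero => simp
  | succ k ih =>
    rw [Function.iterate_succ_apply', Function.iterate_succ_apply', ih,
      deriv_aeval_eq_implicitDeriv y Q hy]

-- The derivatives of `y` are polynomials in `y` of pairwise distinct positive degrees.
theorem not_isDFinite_of_deriv_eq_aeval [IsDomain R] [CharZero R] [DifferentialAlgebra R A]
    {Q : R[X]} (hQ : 2 ≤ Q.natDegree) {y : A} (hy : Transcendental R y) (hyQ : y′ = aeval y Q) :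
    ¬ IsDFinite R y := by
  rintro ⟨c, hc, r, hr⟩
  let P := Finsupp.linearCombination R (fun k => (implicitDeriv Q)^[k] X) c
  have aeval_P : aeval y P = diffOp c y := by
    simp only [P, diffOp, iterate_deriv_eq_aeval_iterate_implicitDeriv hyQ]
    exact Finsupp.apply_linearCombination R (aeval y).toLinearMap _ c
  have P_eq : P = C r := transcendental_iff_injective.1 hy (by rw [aeval_P, ← hr, aeval_C])
  have natDegree_injective :
      Function.Injective fun k => ((implicitDeriv Q)^[k] (X : R[X])).natDegree := by
    intro j k hjk
    simp only [natDegree_iterate_implicitDeriv_X hQ, add_left_inj] at hjk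
    exact Nat.eq_of_mul_eq_mul_right (by omega) hjk
  obtain ⟨k, hk⟩ := exists_natDegree_linearCombination_eq natDegree_injective hc
  rw [natDegree_iterate_implicitDeriv_X hQ, show Finsupp.linearCombination R _ c = C r from P_eq,
    natDegree_C] at hk
  omega

lemma coeff_implicitDeriv_linear (a b : R) (P : R[X]) (k : ℕ) :
    (implicitDeriv (C a * X + C b) P).coeff k =
      (P.coeff k)′ + a * k * P.coeff k + b * (k + 1) * P.coeff (k + 1) := by
  have h : implicitDeriv (C a * X + C b) P =
      mapCoeffs P + (C a * (derivative P * X) + C b * derivative P) := by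
    change mapCoeffs P + (C a * X + C b) * derivative P = _
    ring
  rw [h]
  cases k with
  | zero => simp [coeff_derivative]
  | succ k =>
    simp only [coeff_add, coeff_mapCoeffs, coeff_C_mul, coeff_mul_X, coeff_derivative]
    push_cast
    ring

-- Cleared of denominators, the conclusion says that `u / v` solves the same equation as `y`. The
-- witness is the mean of the conjugates of `y`, read off the two leading coefficients of a
-- polynomial of least degree that vanishes at `y`.
theorem exists_quotient_solution_of_isAlgebraic [IsDomain R] [CharZero R] [FaithfulSMul R A]
    [DifferentialAlgebra R A] {a b : R} {y : A}
    (hy : y′ = algebraMap R A a * y + algebraMap R A b) (halg : IsAlgebraic R y) :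
    ∃ u v : R, v ≠ 0 ∧ v * u′ - u * v′ = a * u * v + b * v ^ 2 := by
  obtain ⟨P, hP⟩ := exists_minimalFor_of_wellFoundedLT _ (natDegree (R := R)) halg
  obtain ⟨k, hk⟩ : ∃ k, P.natDegree = k + 1 := by
    refine Nat.exists_eq_succ_of_ne_zero fun h0 => hP.1.1 ?_
    obtain ⟨r, rfl⟩ := natDegree_eq_zero.1 h0
    simpa using hP.1.2
  set S := implicitDeriv (C a * X + C b) P
  have aeval_S : aeval y S = 0 := by
    rw [← deriv_aeval_eq_implicitDeriv y _ (by simpa using hy), hP.1.2, map_zero]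
  have coeff_P : ∀ j, k + 1 < j → P.coeff j = 0 := fun j hj =>
    coeff_eq_zero_of_natDegree_lt (hk ▸ hj)
  have natDegree_S : S.natDegree ≤ P.natDegree :=
    natDegree_le_iff_coeff_eq_zero.2 fun j hj => by
      rw [coeff_implicitDeriv_linear, coeff_P j (by omega), coeff_P (j + 1) (by omega)]
      simp
  have proportional := congrArg (coeff · k)
    (leadingCoeff_mul_eq_of_minimalFor hP aeval_S natDegree_S)
  simp only [coeff_C_mul, S, coeff_implicitDeriv_linear, hk, coeff_P (k + 1 + 1) (by omega)]
    at proportional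
  rw [leadingCoeff, hk] at proportional
  refine ⟨-P.coeff k, (k + 1 : ℕ) * P.coeff (k + 1),
    mul_ne_zero (by exact_mod_cast k.succ_ne_zero) ?_, ?_⟩
  · rw [← hk]
    exact leadingCoeff_ne_zero.2 hP.1.1
  · simp only [map_neg, Derivation.leibniz, Derivation.map_natCast, smul_eq_mul]
    push_cast at proportional ⊢
    linear_combination (-(k + 1 : R)) * proportional

lemma deriv_eq_of_mul_one_sub_eq_one {a b x y : A} (hxy : x * (1 - y) = 1)
    (hx : x′ = a * x + b) : y′ = a * (1 - y) + b * (1 - y) ^ 2 := by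
  have h := Differential.deriv.leibniz_of_mul_eq_one ((mul_comm _ _).trans hxy)
  rw [map_sub, Derivation.map_one_eq_zero, hx, smul_eq_mul] at h
  linear_combination a * (1 - y) * hxy - h

end DifferentialAlgebra

section PlusIndecomposable

open Equiv.Perm (sumCongrHom)

variable {k m n : ℕ}

/-- The lengths `k` of the nonempty initial blocks `{0, …, k - 1}` that `π` maps into themselves.
Beyond `n` the block `{i : Fin n | i < k}` is everything, hence every `k ≥ n` qualifies. -/
def blockEnds (π : Equiv.Perm (Fin n)) : Set ℕ :=
  {k | 0 < k ∧ ∀ i : Fin n, (i : ℕ) < k → (π i : ℕ) < k}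

lemma mem_blockEnds_length (hn : 0 < n) (π : Equiv.Perm (Fin n)) : n ∈ blockEnds π :=
  ⟨hn, fun i _ => (π i).isLt⟩

lemma mem_blockEnds_iff_image_eq (hk : 0 < k) (π : Equiv.Perm (Fin n)) :
    k ∈ blockEnds π ↔ (Finset.univ.filter fun i : Fin n => (i : ℕ) < k).image π =
      Finset.univ.filter fun i : Fin n => (i : ℕ) < k := by
  refine ⟨fun h => Finset.eq_of_subset_of_card_le ?_ ?_, fun h => ⟨hk, fun i hi => ?_⟩⟩
  · simpa [Finset.image_subset_iff] using h.2
  · rw [Finset.card_image_of_injective _ π.injective]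
  · simpa using h.subset (Finset.mem_image_of_mem π (by simpa using hi))

lemma plusIndec_iff_isLeast_blockEnds (hn : 0 < n) (π : Equiv.Perm (Fin n)) :
    PlusIndec π ↔ IsLeast (blockEnds π) n := by
  have hπ := mem_blockEnds_length hn π
  simp only [PlusIndec, IsLeast, hπ, true_and, mem_lowerBounds, not_exists, not_and]
  refine ⟨fun h k hk => ?_, fun h k hk hkn himage => ?_⟩
  · by_contra! hkn
    exact h k hk.1 hkn ((mem_blockEnds_iff_image_eq hk.1 π).1 hk)
  · exact hkn.not_ge (h k ((mem_blockEnds_iff_image_eq hk π).2 himage))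

/-- The direct sum of `σ` and `τ`, which acts as `σ` on the first `k` points and as a shift of `τ`
on the last `m` points. -/
def permDirectSum (x : Equiv.Perm (Fin k) × Equiv.Perm (Fin m)) : Equiv.Perm (Fin (k + m)) :=
  finSumFinEquiv.permCongr (sumCongrHom (Fin k) (Fin m) x)

lemma permDirectSum_injective : Function.Injective (permDirectSum (k := k) (m := m)) :=
  finSumFinEquiv.permCongr.injective.comp Equiv.Perm.sumCongrHom_injective

lemma permDirectSum_castAdd (x : Equiv.Perm (Fin k) × Equiv.Perm (Fin m)) (i : Fin k) :
    permDirectSum x (Fin.castAdd m i) = Fin.castAdd m (x.1 i) := by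
  simp [permDirectSum, Equiv.permCongr_apply]

lemma mem_blockEnds_permDirectSum {j : ℕ} (hj : j ≤ k)
    (x : Equiv.Perm (Fin k) × Equiv.Perm (Fin m)) :
    j ∈ blockEnds (permDirectSum x) ↔ j ∈ blockEnds x.1 := by
  refine and_congr_right fun _ => ⟨fun h i hi => ?_, fun h i hi => ?_⟩
  · simpa [permDirectSum_castAdd] using h (Fin.castAdd m i) hi
  · obtain ⟨i, rfl⟩ : ∃ i', Fin.castAdd m i' = i := ⟨⟨i, by omega⟩, rfl⟩
    simpa [permDirectSum_castAdd] using h i hi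

lemma mem_range_permDirectSum {π : Equiv.Perm (Fin (k + m))} (hk : k ∈ blockEnds π) :
    π ∈ Set.range (permDirectSum (k := k) (m := m)) := by
  have mem_range : finSumFinEquiv.symm.permCongr π ∈ (sumCongrHom (Fin k) (Fin m)).range := by
    refine Equiv.Perm.mem_sumCongrHom_range_of_perm_mapsTo_inl ?_
    rintro _ ⟨i, rfl⟩
    refine ⟨⟨π (Fin.castAdd m i), hk.2 _ i.isLt⟩, ?_⟩
    simp [Equiv.permCongr_apply, Equiv.eq_symm_apply]
  obtain ⟨x, hx⟩ := mem_range
  refine ⟨x, ?_⟩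
  ext
  simp [permDirectSum, hx, Equiv.permCongr_apply]

lemma setOf_isLeast_blockEnds_eq (hk : 0 < k) :
    {π : Equiv.Perm (Fin (k + m)) | IsLeast (blockEnds π) k} =
      permDirectSum '' ({σ : Equiv.Perm (Fin k) | PlusIndec σ} ×ˢ Set.univ) := by
  have isLeast_iff (x : Equiv.Perm (Fin k) × Equiv.Perm (Fin m)) :
      IsLeast (blockEnds (permDirectSum x)) k ↔ PlusIndec x.1 := by
    rw [plusIndec_iff_isLeast_blockEnds hk, IsLeast, IsLeast, mem_blockEnds_permDirectSum le_rfl]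
    refine and_congr_right fun _ => ⟨fun h j hj => ?_, fun h j hj => ?_⟩
    · exact (le_total k j).elim id fun hjk => h ((mem_blockEnds_permDirectSum hjk x).2 hj)
    · exact (le_total k j).elim id fun hjk => h ((mem_blockEnds_permDirectSum hjk x).1 hj)
  ext π
  constructor
  · intro hπ
    obtain ⟨x, rfl⟩ := mem_range_permDirectSum hπ.1
    exact ⟨x, ⟨(isLeast_iff x).1 hπ, trivial⟩, rfl⟩
  · rintro ⟨x, hx, rfl⟩
    exact (isLeast_iff x).2 hx.1

lemma ncard_isLeast_blockEnds (hk : 0 < k) (h : k + m = n) :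
    {π : Equiv.Perm (Fin n) | IsLeast (blockEnds π) k}.ncard = plusIndecCount k * m.factorial := by
  subst h
  rw [setOf_isLeast_blockEnds_eq hk, Set.ncard_image_of_injective _ permDirectSum_injective,
    Set.ncard_prod, Set.ncard_univ, Nat.card_perm, Nat.card_fin]
  rfl

lemma isLeast_blockEnds_iff_sInf_eq (hn : 0 < n) (π : Equiv.Perm (Fin n)) :
    IsLeast (blockEnds π) k ↔ sInf (blockEnds π) = k :=
  ⟨IsLeast.csInf_eq, fun h => h ▸ isLeast_csInf ⟨n, mem_blockEnds_length hn π⟩⟩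

theorem factorial_succ_eq_sum_plusIndecCount (n : ℕ) :
    (n + 1).factorial =
      ∑ x ∈ Finset.HasAntidiagonal.antidiagonal n,
        plusIndecCount (x.1 + 1) * x.2.factorial := by
  have isLeast_iff (π : Equiv.Perm (Fin (n + 1))) {k : ℕ} :=
    isLeast_blockEnds_iff_sInf_eq (k := k) n.succ_pos π
  have sInf_mem_Icc (π : Equiv.Perm (Fin (n + 1))) :
      0 < sInf (blockEnds π) ∧ sInf (blockEnds π) ≤ n + 1 :=
    have h := (isLeast_iff π).2 rfl
    ⟨h.1.1, h.2 (mem_blockEnds_length n.succ_pos π)⟩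
  calc (n + 1).factorial
      = (Finset.univ : Finset (Equiv.Perm (Fin (n + 1)))).card := by
        rw [Finset.card_univ, Fintype.card_perm, Fintype.card_fin]
    _ = ∑ x ∈ Finset.HasAntidiagonal.antidiagonal n, (Finset.univ.filter fun π =>
          (sInf (blockEnds π) - 1, n + 1 - sInf (blockEnds π)) = x).card :=
        Finset.card_eq_sum_card_fiberwise fun π _ => by
          have := sInf_mem_Icc π
          simp only [Finset.mem_coe, Finset.HasAntidiagonal.mem_antidiagonal]
          omega
    _ = _ := Finset.sum_congr rfl fun x hx => by
        rw [Finset.HasAntidiagonal.mem_antidiagonal] at hx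
        rw [← ncard_isLeast_blockEnds (n := n + 1) x.1.succ_pos (by omega),
          ← Set.ncard_coe_finset]
        congr 1
        ext π
        have := sInf_mem_Icc π
        simp only [Finset.coe_filter, Finset.mem_univ, true_and, Set.mem_ofPred_eq, isLeast_iff,
          Prod.ext_iff]
        omega

end PlusIndecomposable

section XSqDerivation

open Polynomial
open scoped Differential PowerSeries

variable {R : Type*} [CommRing R]

/-- The differential ring whose derivation is `D`, with the base ring of `D` forgotten. -/
abbrev differentialOfDerivation {A : Type*} [CommRing A] [Algebra R A] (D : Derivation R A A) :
    Differential A :=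
  ⟨D.restrictScalars ℤ⟩

/-- Polynomials with the derivation `x² d/dx`. For generating series it is more convenient than
`d/dx` because it raises degrees by one. -/
noncomputable abbrev polynomialXSqDifferential : Differential R[X] :=
  differentialOfDerivation ((X ^ 2 : R[X]) • derivative')

attribute [local instance] polynomialXSqDifferential

/-- Power series with the derivation `x² d/dx`. -/
noncomputable abbrev powerSeriesXSqDifferential : Differential R⟦X⟧ :=
  differentialOfDerivation ((PowerSeries.X ^ 2 : R⟦X⟧) • PowerSeries.derivative R)

attribute [local instance] powerSeriesXSqDifferential

lemma polynomial_deriv_eq (p : R[X]) : p′ = X ^ 2 * derivative p := rfl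

lemma powerSeries_deriv_eq (f : R⟦X⟧) : f′ = PowerSeries.X ^ 2 * PowerSeries.derivative R f := rfl

lemma algebraMap_polynomial_powerSeries (p : R[X]) : algebraMap R[X] R⟦X⟧ p = p := by
  simp [PowerSeries.algebraMap_apply']

lemma differentialAlgebra_polynomial_powerSeries : DifferentialAlgebra R[X] R⟦X⟧ where
  deriv_algebraMap p := by
    simp [algebraMap_polynomial_powerSeries, polynomial_deriv_eq, powerSeries_deriv_eq,
      PowerSeries.derivative_coe]

attribute [local instance] differentialAlgebra_polynomial_powerSeries

lemma coeff_zero_powerSeries_deriv (f : R⟦X⟧) : PowerSeries.coeff 0 (f′) = 0 := by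
  simp [powerSeries_deriv_eq]

lemma coeff_succ_powerSeries_deriv (f : R⟦X⟧) (n : ℕ) :
    PowerSeries.coeff (n + 1) (f′) = n * PowerSeries.coeff n f := by
  rw [powerSeries_deriv_eq, pow_two, mul_assoc, PowerSeries.coeff_succ_X_mul]
  cases n with
  | zero => simp
  | succ n =>
    rw [PowerSeries.coeff_succ_X_mul, PowerSeries.coeff_derivative]
    push_cast
    ring

lemma coeff_iterate_powerSeries_deriv (f : R⟦X⟧) (n k : ℕ) :
    PowerSeries.coeff (n + k) (Differential.deriv^[k] f) =
      (ascPochhammer R k).eval (n : R) * PowerSeries.coeff n f := by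
  induction k with
  | zero => simp
  | succ k ih =>
    rw [Function.iterate_succ_apply', ← add_assoc, coeff_succ_powerSeries_deriv, ih,
      ascPochhammer_succ_eval]
    push_cast
    ring

variable (R) in
/-- The rising factorials, as a polynomial sequence. -/
noncomputable def ascPochhammerSequence [IsDomain R] : Polynomial.Sequence R where
  elems' := ascPochhammer R
  degree_eq' k := by
    rw [degree_eq_natDegree (monic_ascPochhammer R k).ne_zero, ascPochhammer_natDegree]

lemma exists_diffOp_coeff_eq_eval_mul [IsDomain R] {q : R[X]} {m : ℕ} (hq : q.natDegree ≤ m) :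
    ∃ c : ℕ →₀ R[X], ∀ (f : R⟦X⟧) (n : ℕ),
      PowerSeries.coeff (n + m) (diffOp c f) = q.eval (n : R) * PowerSeries.coeff n f := by
  have mem_span : q ∈ Submodule.span R (ascPochhammerSequence R '' Set.Iic m) := by
    rw [Polynomial.Sequence.span_degreeLE _ fun i _ =>
      (congrArg IsUnit (monic_ascPochhammer R i)).mpr isUnit_one]
    exact mem_degreeLE.2 (natDegree_le_iff_degree_le.1 hq)
  clear hq
  induction mem_span using Submodule.span_induction with
  | mem q hq =>
    obtain ⟨k, hk, rfl⟩ := hq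
    refine ⟨Finsupp.single k (X ^ (m - k)), fun f n => ?_⟩
    rw [Set.mem_Iic] at hk
    rw [diffOp, Finsupp.linearCombination_single, Algebra.smul_def,
      algebraMap_polynomial_powerSeries, show n + m = n + k + (m - k) by omega, coe_pow, coe_X,
      PowerSeries.coeff_X_pow_mul, coeff_iterate_powerSeries_deriv]
    rfl
  | zero => exact ⟨0, by simp [diffOp]⟩
  | add q₁ q₂ _ _ h₁ h₂ =>
    obtain ⟨c₁, h₁⟩ := h₁
    obtain ⟨c₂, h₂⟩ := h₂
    exact ⟨c₁ + c₂, fun f n => by simp [diffOp, ← h₁, ← h₂, add_mul]⟩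
  | smul r q _ h =>
    obtain ⟨c, h⟩ := h
    refine ⟨C r • c, fun f n => ?_⟩
    rw [diffOp, map_smul, Algebra.smul_def, algebraMap_polynomial_powerSeries]
    simp [← h, mul_assoc, diffOp]

lemma exists_diffOp_coeff_eq_recurrence [IsDomain R] (d : ℕ) (p : ℕ → R[X]) :
    ∃ (m : ℕ) (c : ℕ →₀ R[X]), ∀ (f : R⟦X⟧) (n : ℕ),
      PowerSeries.coeff (n + m) (diffOp c f) =
        ∑ i ∈ Finset.range (d + 1), (p i).eval (n : R) * PowerSeries.coeff (n + i) f := by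
  -- `q i` will be evaluated at `n + i`.
  let q (i : ℕ) := taylor (-(i : R)) (p i)
  obtain ⟨m, hm⟩ : ∃ m, ∀ i ∈ Finset.range (d + 1), (q i).natDegree ≤ m :=
    ⟨_, fun i hi => Finset.le_sup (f := fun i => (q i).natDegree) hi⟩
  choose! c hc using fun i hi => exists_diffOp_coeff_eq_eval_mul (hm i hi)
  refine ⟨d + m, ∑ i ∈ Finset.range (d + 1), (X ^ (d - i) : R[X]) • c i, fun f n => ?_⟩
  rw [diffOp, map_sum, map_sum]
  refine Finset.sum_congr rfl fun i hi => ?_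
  have index_eq : n + (d + m) = n + i + m + (d - i) := by
    have := Finset.mem_range.1 hi
    omega
  rw [map_smul, Algebra.smul_def, algebraMap_polynomial_powerSeries, coe_pow, coe_X, index_eq,
    PowerSeries.coeff_X_pow_mul, ← diffOp, hc i hi]
  simp [q, taylor_eval]

lemma mem_range_algebraMap_of_coeff_eq_zero {f : R⟦X⟧} {m : ℕ}
    (hf : ∀ n, m ≤ n → PowerSeries.coeff n f = 0) : f ∈ Set.range (algebraMap R[X] R⟦X⟧) := by
  refine ⟨PowerSeries.trunc m f, ?_⟩
  ext n
  rw [algebraMap_polynomial_powerSeries, coeff_coe, PowerSeries.coeff_trunc]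
  split_ifs with hn
  · rfl
  · exact (hf n (not_lt.1 hn)).symm

theorem IsPRecursive.isDFinite {a : ℕ → ℚ} (ha : IsPRecursive a) {f : ℚ⟦X⟧}
    (hf : ∀ n, 1 ≤ n → PowerSeries.coeff n f = a n) : IsDFinite ℚ[X] f := by
  obtain ⟨d, p, hpd, hrec⟩ := ha
  obtain ⟨m, c, hc⟩ := exists_diffOp_coeff_eq_recurrence d p
  refine ⟨c, ?_, mem_range_algebraMap_of_coeff_eq_zero (m := m + 1) fun N hN => ?_⟩
  · rintro rfl
    refine hpd (eq_zero_of_infinite_isRoot _ ((Set.infinite_range_of_injective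
      (Nat.cast_injective (R := ℚ))).mono ?_))
    rintro _ ⟨n, rfl⟩
    -- The zero operator applied to `x ^ (n + d)` isolates the leading term of the recurrence.
    have h := hc (PowerSeries.X ^ (n + d)) n
    rw [Finset.sum_range_succ, Finset.sum_eq_zero fun i hi => ?_] at h
    · simpa [diffOp, PowerSeries.coeff_X_pow, eq_comm] using h
    · rw [PowerSeries.coeff_X_pow, if_neg (by have := Finset.mem_range.1 hi; omega), mul_zero]
  · obtain ⟨n, rfl⟩ := Nat.exists_eq_add_of_le hN
    rw [show m + 1 + n = n + 1 + m by ring, hc, ← hrec (n + 1) (by omega)]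
    exact Finset.sum_congr rfl fun i _ => by rw [hf _ (by omega)]


lemma coeff_X_mul_wronskian {v w : R[X]} {m n : ℕ} (hv : v.natDegree ≤ m)
    (hw : w.natDegree ≤ n) :
    (X * wronskian v w).coeff (m + n) = ((n : R) - m) * (v.coeff m * w.coeff n) := by
  have coeff_X_mul_derivative : ∀ (p : R[X]) (k : ℕ),
      (X * derivative p).coeff k = k * p.coeff k := by
    rintro p (_ | k)
    · simp
    · rw [coeff_X_mul, coeff_derivative]
      push_cast
      ring
  have natDegree_X_mul_derivative : ∀ {p : R[X]} {k : ℕ}, p.natDegree ≤ k →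
      (X * derivative p).natDegree ≤ k := fun {p k} hp =>
    natDegree_le_iff_coeff_eq_zero.2 fun j hj => by
      rw [coeff_X_mul_derivative, coeff_eq_zero_of_natDegree_lt (by omega), mul_zero]
  have h : X * wronskian v w = v * (X * derivative w) - X * derivative v * w := by
    rw [wronskian]
    ring
  rw [h, coeff_sub, coeff_mul_add_eq_of_natDegree_le hv (natDegree_X_mul_derivative hw),
    coeff_mul_add_eq_of_natDegree_le (natDegree_X_mul_derivative hv) hw,
    coeff_X_mul_derivative, coeff_X_mul_derivative]
  ring

-- With `w = x u` the equation reads `x² W(v, w) = v w - x v²`, whose two sides have different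
-- coefficients in degree `deg v + max (deg v) (deg w) + 1`.
lemma X_sq_mul_wronskian_ne [IsDomain R] [CharZero R] {u v : R[X]} (hv : v ≠ 0) :
    X ^ 2 * wronskian v u ≠ (1 - X) * u * v - v ^ 2 := by
  intro h
  set w := X * u with hw
  set m := v.natDegree with hm
  have leadingCoeff_v : v.coeff m ≠ 0 := leadingCoeff_ne_zero.2 hv
  have h' : X * (X * wronskian v w) = v * w - X * (v * v) := by
    rw [wronskian] at h ⊢
    simp only [hw, derivative_mul, derivative_X]
    linear_combination X * h
  have compare_coeff : ∀ n, m ≤ n → w.natDegree ≤ n →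
      ((n : R) - m) * (v.coeff m * w.coeff n) = -(v.coeff m * v.coeff n) := fun n hmn hwn => by
    have := congrArg (coeff · (m + n + 1)) h'
    simp only [coeff_X_mul, coeff_sub] at this
    rwa [coeff_X_mul_wronskian hm.ge hwn, coeff_mul_add_eq_of_natDegree_le hm.ge hmn,
      coeff_eq_zero_of_natDegree_lt (p := v * w) (natDegree_mul_le.trans_lt (by omega)),
      zero_sub] at this
  rcases le_or_gt w.natDegree m with hwm | hmw
  · simpa [leadingCoeff_v] using compare_coeff m le_rfl hwm
  · have leadingCoeff_w : w.coeff w.natDegree ≠ 0 :=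
      leadingCoeff_ne_zero.2 (ne_zero_of_natDegree_gt hmw)
    have := compare_coeff w.natDegree hmw.le le_rfl
    rw [coeff_eq_zero_of_natDegree_lt (p := v) hmw, mul_zero, neg_zero] at this
    exact mul_ne_zero (sub_ne_zero.2 (Nat.cast_injective.ne hmw.ne'))
      (mul_ne_zero leadingCoeff_v leadingCoeff_w) this

variable (R) in
/-- The formal power series `∑ n! xⁿ`. -/
def factorialSeries : R⟦X⟧ :=
  PowerSeries.mk fun n => (n.factorial : R)

lemma factorialSeries_deriv :
    (factorialSeries R)′ = (1 - PowerSeries.X) * factorialSeries R - 1 := by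
  ext n
  cases n with
  | zero => simp [coeff_zero_powerSeries_deriv, factorialSeries]
  | succ n =>
    rw [coeff_succ_powerSeries_deriv]
    simp only [factorialSeries, sub_mul, one_mul, map_sub, PowerSeries.coeff_mk,
      PowerSeries.coeff_succ_X_mul, PowerSeries.coeff_one, n.succ_ne_zero, if_false,
      Nat.factorial_succ]
    push_cast
    ring

theorem transcendental_factorialSeries [IsDomain R] [CharZero R] :
    Transcendental R[X] (factorialSeries R) := by
  intro halg
  have : FaithfulSMul R[X] R⟦X⟧ := (faithfulSMul_iff_algebraMap_injective _ _).2 fun p q hpq =>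
    coe_injective R (by simpa only [algebraMap_polynomial_powerSeries] using hpq)
  obtain ⟨u, v, hv, h⟩ := exists_quotient_solution_of_isAlgebraic (a := 1 - X) (b := -1)
    (by simp [factorialSeries_deriv, algebraMap_polynomial_powerSeries, sub_eq_add_neg]) halg
  refine X_sq_mul_wronskian_ne (u := u) hv ?_
  rw [polynomial_deriv_eq, polynomial_deriv_eq] at h
  rw [wronskian]
  linear_combination h

variable (R) in
/-- The generating series `∑ iₙ xⁿ`, summed over `n ≥ 1`, of the plus indecomposable
permutations. -/
noncomputable def plusIndecSeries : R⟦X⟧ :=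
  PowerSeries.X * PowerSeries.mk fun n => (plusIndecCount (n + 1) : R)

lemma coeff_plusIndecSeries {n : ℕ} (hn : 1 ≤ n) :
    PowerSeries.coeff n (plusIndecSeries R) = plusIndecCount n := by
  obtain ⟨n, rfl⟩ := Nat.exists_eq_add_of_le' hn
  rw [plusIndecSeries, PowerSeries.coeff_succ_X_mul, PowerSeries.coeff_mk]

lemma factorialSeries_mul_one_sub_plusIndecSeries :
    factorialSeries R * (1 - plusIndecSeries R) = 1 := by
  suffices h : factorialSeries R = 1 + plusIndecSeries R * factorialSeries R by
    linear_combination h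
  ext n
  rw [plusIndecSeries, mul_assoc]
  cases n with
  | zero => simp [factorialSeries]
  | succ n =>
    rw [map_add, PowerSeries.coeff_succ_X_mul, PowerSeries.coeff_mul]
    simp [factorialSeries, PowerSeries.coeff_one, factorial_succ_eq_sum_plusIndecCount]

lemma plusIndecSeries_deriv :
    (plusIndecSeries R)′ =
      -PowerSeries.X + (1 + PowerSeries.X) * plusIndecSeries R - plusIndecSeries R ^ 2 := by
  rw [deriv_eq_of_mul_one_sub_eq_one factorialSeries_mul_one_sub_plusIndecSeries
    (factorialSeries_deriv.trans (sub_eq_add_neg _ _))]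
  ring

lemma transcendental_plusIndecSeries [IsDomain R] [CharZero R] :
    Transcendental R[X] (plusIndecSeries R) := fun halg =>
  let _ : Invertible (1 - plusIndecSeries R) :=
    ⟨factorialSeries R, factorialSeries_mul_one_sub_plusIndecSeries,
      (mul_comm _ _).trans factorialSeries_mul_one_sub_plusIndecSeries⟩
  transcendental_factorialSeries (isAlgebraic_one.sub halg).invOf

theorem not_isDFinite_plusIndecSeries [IsDomain R] [CharZero R] :
    ¬ IsDFinite R[X] (plusIndecSeries R) := by
  let Q : R[X][X] := C (-1) * X ^ 2 + C (1 + X) * X + C (-X)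
  have natDegree_Q : Q.natDegree = 2 := natDegree_quadratic (neg_ne_zero.2 one_ne_zero)
  refine not_isDFinite_of_deriv_eq_aeval natDegree_Q.ge transcendental_plusIndecSeries ?_
  simp only [Q, plusIndecSeries_deriv, map_add, map_mul, map_pow, map_neg, map_one, aeval_X,
    aeval_C, algebraMap_polynomial_powerSeries, coe_X]
  ring

end XSqDerivation

/-- The sequence `(iₙ)_{n≥1}` of numbers of plus indecomposable permutations is not
P-recursive. -/
theorem plusIndecCount_not_PRecursive :
    ¬ IsPRecursive (fun n => (plusIndecCount n : ℚ)) := by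
  intro h
  exact not_isDFinite_plusIndecSeries (h.isDFinite fun _ => coeff_plusIndecSeries)
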